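/- arXiv:2507.20544 — 4 statements merged into one kernel-verified Lean document; each statement's English description precedes it below -/
import Mathlib

section
/- For every integer m > 1, the sum over k from 1 to ⌊m/2⌋ of (log(2 sin(πk/m)))² is strictly less than (π²/24)·m + (log 2)². -/
open Real Finset

lemma aux_orth (n k : ℕ) (h : n ≠ k) :
    ∫ x in (0:ℝ)..π, cos (n * x) * cos (k * x) = 0 := by
  have h1 : ((n:ℝ) - k) ≠ 0 := by
    intro h'; apply h; exact_mod_cast sub_eq_zero.mp h'
  have h2 : ((n:ℝ) + k) ≠ 0 := by
    intro h'; apply h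
    have : n + k = 0 := by exact_mod_cast h'
    omega
  have hd : ∀ x ∈ Set.uIcc (0:ℝ) π, HasDerivAt (fun x : ℝ =>
      sin (((n:ℝ) - k) * x) / (2 * ((n:ℝ) - k)) + sin (((n:ℝ) + k) * x) / (2 * ((n:ℝ) + k)))
      (cos (n * x) * cos (k * x)) x := by
    intro x _
    have e1 := (((hasDerivAt_id x).const_mul ((n:ℝ) - k)).sin).div_const (2 * ((n:ℝ) - k))
    have e2 := (((hasDerivAt_id x).const_mul ((n:ℝ) + k)).sin).div_const (2 * ((n:ℝ) + k))
    refine HasDerivAt.congr_deriv (e1.add e2) ?_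
    simp only [id]
    rw [sub_mul, add_mul, cos_sub, cos_add]
    field_simp
    ring
  rw [intervalIntegral.integral_eq_sub_of_hasDerivAt hd
    (Continuous.intervalIntegrable (by fun_prop) _ _)]
  have s1 : sin (((n:ℝ) - k) * π) = 0 := by
    have := sin_int_mul_pi ((n:ℤ) - k); push_cast at this; exact this
  have s2 : sin (((n:ℝ) + k) * π) = 0 := by
    have := sin_nat_mul_pi (n + k); push_cast at this; exact this
  simp [s1, s2]

lemma aux_diag (n : ℕ) (h : n ≠ 0) :
    ∫ x in (0:ℝ)..π, cos (n * x) * cos (n * x) = π / 2 := by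
  have h1 : (n:ℝ) ≠ 0 := by exact_mod_cast h
  have hd : ∀ x ∈ Set.uIcc (0:ℝ) π, HasDerivAt (fun x : ℝ =>
      x / 2 + sin ((2 * (n:ℝ)) * x) / (4 * n))
      (cos (n * x) * cos (n * x)) x := by
    intro x _
    have e1 := (hasDerivAt_id x).div_const 2
    have e2 := (((hasDerivAt_id x).const_mul (2 * (n:ℝ))).sin).div_const (4 * (n:ℝ))
    refine HasDerivAt.congr_deriv (e1.add e2) ?_
    simp only [id]
    rw [mul_assoc, cos_two_mul]
    field_simp
    ring
  rw [intervalIntegral.integral_eq_sub_of_hasDerivAt hd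
    (Continuous.intervalIntegrable (by fun_prop) _ _)]
  have s2 : sin ((2 * (n:ℝ)) * π) = 0 := by
    have := sin_nat_mul_pi (2 * n); push_cast at this; exact this
  simp [s2]

/-- the regularised function -/
noncomputable def auxF (r x : ℝ) : ℝ := log (1 - 2 * r * cos x + r ^ 2) / 2

lemma aux_pos {r : ℝ} (h0 : 0 < r) (h1 : r < 1) (x : ℝ) : 0 < 1 - 2 * r * cos x + r ^ 2 := by
  nlinarith [cos_le_one x, mul_pos (sub_pos.2 h1) (sub_pos.2 h1)]

lemma aux_cont {r : ℝ} (h0 : 0 < r) (h1 : r < 1) : Continuous (auxF r) := by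
  unfold auxF
  exact (Continuous.log (by fun_prop) (fun x => (aux_pos h0 h1 x).ne')).div_const 2

lemma aux_series {r : ℝ} (h0 : 0 < r) (h1 : r < 1) (x : ℝ) :
    HasSum (fun n : ℕ => -(r ^ n / n) * cos (n * x)) (auxF r x) := by
  set z : ℂ := r * Complex.exp (x * Complex.I) with hz
  have hn : ‖z‖ < 1 := by
    rw [hz, norm_mul, Complex.norm_exp_ofReal_mul_I, Complex.norm_real, Real.norm_of_nonneg h0.le]
    simpa using h1
  have h := (Complex.hasSum_re (Complex.hasSum_taylorSeries_neg_log hn)).neg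
  have goal1 : ∀ n : ℕ, -(r ^ n / n) * cos (n * x) = -(z ^ n / n).re := by
    intro n
    have : z ^ n / n = ((r ^ n / n : ℝ) : ℂ) * Complex.exp ((n * x : ℝ) * Complex.I) := by
      rw [hz, mul_pow, ← Complex.exp_nat_mul]
      push_cast
      rw [mul_assoc (n:ℂ)]
      ring
    rw [this, Complex.re_ofReal_mul, Complex.exp_ofReal_mul_I_re]
    ring
  have goal2 : auxF r x = -(-Complex.log (1 - z)).re := by
    rw [Complex.neg_re, neg_neg, Complex.log_re, auxF]
    have : 1 - 2 * r * cos x + r ^ 2 = ‖1 - z‖ ^ 2 := by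
      rw [← Complex.normSq_eq_norm_sq, Complex.normSq_apply, hz]
      simp only [Complex.sub_re, Complex.sub_im, Complex.re_ofReal_mul, Complex.im_ofReal_mul,
        Complex.exp_ofReal_mul_I_re, Complex.exp_ofReal_mul_I_im, Complex.one_re, Complex.one_im]
      nlinarith [sin_sq_add_cos_sq x]
    rw [this, log_pow]
    push_cast; ring
  rw [goal2]
  simp_rw [goal1]
  exact h

lemma aux_summable {r : ℝ} (h0 : 0 < r) (h1 : r < 1) : Summable (fun n : ℕ => r ^ n / n) := by
  refine Summable.of_nonneg_of_le (fun n => by positivity) (fun n => ?_)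
    (summable_geometric_of_lt_one h0.le h1)
  rcases Nat.eq_zero_or_pos n with rfl | hn
  · simp
  · exact div_le_self (by positivity) (by exact_mod_cast hn)

/-- integrate the series against a continuous function -/
lemma aux_int {r : ℝ} (h0 : 0 < r) (h1 : r < 1) (g : ℝ → ℝ) (hg : Continuous g) :
    HasSum (fun n : ℕ => -(r ^ n / n) * ∫ x in (0:ℝ)..π, cos (n * x) * g x)
      (∫ x in (0:ℝ)..π, auxF r x * g x) := by
  have := intervalIntegral.hasSum_integral_of_dominated_convergence
    (μ := MeasureTheory.volume) (a := 0) (b := π)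
    (F := fun (n:ℕ) x => -(r ^ n / n) * cos (n * x) * g x) (f := fun x => auxF r x * g x)
    (fun (n:ℕ) x => (r ^ n / n) * |g x|)
    (fun n => (Continuous.aestronglyMeasurable (by fun_prop)))
    (fun n => Filter.Eventually.of_forall (fun x _ => by
      rw [norm_mul, norm_mul, norm_neg, Real.norm_of_nonneg (by positivity : 0 ≤ r ^ n / (n:ℝ)),
        Real.norm_eq_abs, Real.norm_eq_abs]
      apply mul_le_mul_of_nonneg_right _ (abs_nonneg _)
      exact mul_le_of_le_one_right (by positivity) (abs_cos_le_one _)))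
    (Filter.Eventually.of_forall (fun x _ => (aux_summable h0 h1).mul_right _))
    (by
      simp_rw [tsum_mul_right]
      exact Continuous.intervalIntegrable (by fun_prop) _ _)
    (Filter.Eventually.of_forall (fun x _ => (aux_series h0 h1 x).mul_right _))
  simp_rw [mul_assoc, intervalIntegral.integral_const_mul] at this
  exact this

lemma aux_coef {r : ℝ} (h0 : 0 < r) (h1 : r < 1) (n : ℕ) :
    ∫ x in (0:ℝ)..π, cos (n * x) * auxF r x = -(r ^ n / n) * (π / 2) := by
  have h := aux_int h0 h1 (fun x => cos (n * x)) (by fun_prop)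
  have h' := h.unique (hasSum_single n (fun k hk => by rw [aux_orth k n hk, mul_zero]))
  simp_rw [mul_comm (cos _)]
  rw [h']
  rcases Nat.eq_zero_or_pos n with rfl | hn
  · simp
  · rw [aux_diag n hn.ne']

lemma aux_sq {r : ℝ} (h0 : 0 < r) (h1 : r < 1) :
    ∫ x in (0:ℝ)..π, auxF r x ^ 2 ≤ π ^ 3 / 12 := by
  have h := aux_int h0 h1 (auxF r) (aux_cont h0 h1)
  simp_rw [aux_coef h0 h1] at h
  have h2 := hasSum_zeta_two.mul_right (π / 2)
  have := hasSum_le (fun n => ?_) h h2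
  · simp_rw [sq]
    refine this.trans (le_of_eq ?_)
    ring
  · have e : -(r ^ n / (n:ℝ)) * (-(r ^ n / n) * (π / 2)) = (r ^ n) ^ 2 * (1 / (n:ℝ) ^ 2 * (π / 2)) := by
      ring
    rw [e]
    apply mul_le_of_le_one_left (by positivity)
    exact pow_le_one₀ (by positivity) (pow_le_one₀ h0.le h1.le)

lemma aux_mono {r : ℝ} (h0 : 0 < r) (h1 : r < 1) : MonotoneOn (auxF r) (Set.Icc 0 π) := by
  intro x hx y hy hxy
  unfold auxF
  have := strictAntiOn_cos.antitoneOn hx hy hxy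
  have := log_le_log (aux_pos h0 h1 x) (show _ ≤ 1 - 2 * r * cos y + r ^ 2 by nlinarith)
  linarith

lemma aux_split (y : ℝ) : y ^ 2 = (min y 0) ^ 2 + (max y 0) ^ 2 := by
  rcases le_total y 0 with h | h <;> simp [h]

/-- comparison of the sum and the integral for a monotone function -/
lemma aux_compare (g : ℝ → ℝ) (hg : Continuous g) (n : ℕ) (b : ℝ) (hb : (n:ℝ) + 1 ≤ b)
    (hm : MonotoneOn g (Set.Icc 0 b)) (C : ℝ) (hC : g (n + 1) ≤ C) (hC0 : 0 ≤ C) :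
    ∑ i ∈ range (n + 1), g (i + 1) ^ 2 + (1 / 4) * ((min (g (1 / 4)) 0) ^ 2 - (min (g 1) 0) ^ 2)
      ≤ (∫ t in (0:ℝ)..b, g t ^ 2) + C ^ 2 := by
  have hn : (0:ℝ) ≤ n := n.cast_nonneg
  have hN : AntitoneOn (fun t => (min (g t) 0) ^ 2) (Set.Icc 0 b) := by
    intro x hx y hy hxy
    have h1 : min (g x) 0 ≤ min (g y) 0 := min_le_min_right 0 (hm hx hy hxy)
    have h2 : min (g y) 0 ≤ 0 := min_le_right _ _
    show (min (g y) 0) ^ 2 ≤ (min (g x) 0) ^ 2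
    nlinarith
  have hP : MonotoneOn (fun t => (max (g t) 0) ^ 2) (Set.Icc 0 b) := by
    intro x hx y hy hxy
    have h1 : max (g x) 0 ≤ max (g y) 0 := max_le_max_right 0 (hm hx hy hxy)
    exact pow_le_pow_left₀ (le_max_right _ _) h1 2
  have cN : Continuous (fun t => (min (g t) 0) ^ 2) := by fun_prop
  have cP : Continuous (fun t => (max (g t) 0) ^ 2) := by fun_prop
  have cg : Continuous (fun t => g t ^ 2) := by fun_prop
  have sub : Set.Icc (1:ℝ) (1 + n) ⊆ Set.Icc 0 b := Set.Icc_subset_Icc (by norm_num) (by linarith)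
  have i1 := AntitoneOn.sum_le_integral (x₀ := (1:ℝ)) (a := n) (hN.mono sub)
  have i2 := MonotoneOn.sum_le_integral (x₀ := (1:ℝ)) (a := n) (hP.mono sub)
  have hlow : ∀ u v : ℝ, 0 ≤ u → u ≤ v → v ≤ 1 →
      (v - u) * (min (g v) 0) ^ 2 ≤ ∫ t in u..v, g t ^ 2 := by
    intro u v hu huv hv
    have : ∫ t in u..v, (min (g v) 0) ^ 2 ≤ ∫ t in u..v, g t ^ 2 := by
      apply intervalIntegral.integral_mono_on huv (by simp) (cg.intervalIntegrable _ _)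
      intro t ht
      have := hN (a := t) (b := v) ⟨by linarith [ht.1], by linarith [ht.2]⟩
        ⟨by linarith, by linarith⟩ ht.2
      rw [aux_split (g t)]
      simp only at this
      nlinarith [sq_nonneg (max (g t) 0)]
    simpa using this
  have j1 := hlow 0 (1/4) (by norm_num) (by norm_num) (by norm_num)
  have j2 := hlow (1/4) 1 (by norm_num) (by norm_num) (by norm_num)
  have j3 : 0 ≤ ∫ t in (1 + (n:ℝ))..b, g t ^ 2 :=
    intervalIntegral.integral_nonneg (by linarith) (fun t _ => sq_nonneg _)
  have j4 : ∫ t in (1:ℝ)..(1 + n), g t ^ 2 = (∫ t in (1:ℝ)..(1 + n), (min (g t) 0) ^ 2)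
      + ∫ t in (1:ℝ)..(1 + n), (max (g t) 0) ^ 2 := by
    rw [← intervalIntegral.integral_add (cN.intervalIntegrable _ _) (cP.intervalIntegrable _ _)]
    simp_rw [← aux_split]
  have k1 := intervalIntegral.integral_add_adjacent_intervals
    (cg.intervalIntegrable (μ := MeasureTheory.volume) 0 (1/4)) (cg.intervalIntegrable (1/4) 1)
  have k2 := intervalIntegral.integral_add_adjacent_intervals
    (cg.intervalIntegrable (μ := MeasureTheory.volume) 0 1) (cg.intervalIntegrable 1 (1 + n))
  have k3 := intervalIntegral.integral_add_adjacent_intervals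
    (cg.intervalIntegrable (μ := MeasureTheory.volume) 0 (1 + n)) (cg.intervalIntegrable (1 + n) b)
  have s : ∑ i ∈ range (n + 1), g (i + 1) ^ 2
      = (∑ i ∈ range n, (min (g (1 + ((i + 1 : ℕ) : ℝ))) 0) ^ 2 + (min (g 1) 0) ^ 2)
       + (∑ i ∈ range n, (max (g (1 + (i : ℝ))) 0) ^ 2 + (max (g (n + 1)) 0) ^ 2) := by
    have e : ∀ i : ℕ, g (i + 1) ^ 2 = (min (g (i + 1)) 0) ^ 2 + (max (g (i + 1)) 0) ^ 2 :=
      fun i => aux_split _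
    rw [sum_congr rfl (fun i _ => e i), sum_add_distrib]
    congr 1
    · rw [sum_range_succ']
      simp [add_comm]
    · rw [sum_range_succ]
      simp [add_comm]
  have l : (max (g (n + 1)) 0) ^ 2 ≤ C ^ 2 :=
    pow_le_pow_left₀ (le_max_right _ _) (max_le hC hC0) 2
  rw [s]
  linarith

lemma aux_one (x : ℝ) : auxF 1 (2 * x) = log (2 * sin x) := by
  have : 1 - 2 * 1 * cos (2 * x) + 1 ^ 2 = (2 * sin x) ^ 2 := by
    rw [cos_two_mul]; nlinarith [sin_sq_add_cos_sq x]
  rw [auxF, this, log_pow]; push_cast; ring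

theorem sum_log_sq_sin_upper (m : ℕ) (hm : 1 < m) :
    ∑ k ∈ Finset.Icc 1 (m / 2), (Real.log (2 * Real.sin (π * k / m)))^2
      < π^2 / 24 * m + (Real.log 2)^2 := by
  obtain ⟨n, hn⟩ : ∃ n, m / 2 = n + 1 := ⟨m / 2 - 1, by omega⟩
  have hm0 : (0:ℝ) < m := by positivity
  have hm2 : (2:ℝ) ≤ m := by exact_mod_cast hm
  have hnm : (n:ℝ) + 1 ≤ m / 2 := by
    have : 2 * (n + 1) ≤ m := by omega
    have : 2 * ((n:ℝ) + 1) ≤ m := by exact_mod_cast this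
    linarith
  have hpi := pi_pos
  set h : ℝ := 2 * π / m with hh
  have hpos : 0 < h := by positivity
  have hend : h * (m / 2) = π := by rw [hh]; field_simp
  -- inequality for r < 1
  have key : ∀ r ∈ Set.Ioo (0:ℝ) 1,
      ∑ i ∈ range (n + 1), auxF r (h * (i + 1)) ^ 2
        + (1 / 4) * ((min (auxF r (h * (1 / 4))) 0) ^ 2 - (min (auxF r (h * 1)) 0) ^ 2)
      ≤ π ^ 2 / 24 * m + (log 2) ^ 2 := by
    rintro r ⟨h0, h1⟩
    have c := aux_compare (fun t => auxF r (h * t)) ((aux_cont h0 h1).comp (by fun_prop)) n (m / 2)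
      hnm ?_ (log 2) ?_ (log_nonneg (by norm_num))
    · refine c.trans ?_
      have e : ∫ t in (0:ℝ)..(m / 2), auxF r (h * t) ^ 2 = h⁻¹ * ∫ t in (0:ℝ)..π, auxF r t ^ 2 := by
        rw [intervalIntegral.integral_comp_mul_left (fun t => auxF r t ^ 2) hpos.ne', hend]
        simp
      rw [e]
      have := mul_le_mul_of_nonneg_left (aux_sq h0 h1) (inv_nonneg.2 hpos.le)
      have e2 : h⁻¹ * (π ^ 3 / 12) = π ^ 2 / 24 * m := by
        rw [hh]; field_simp; norm_num
      linarith
    · intro x hx y hy hxy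
      apply aux_mono h0 h1 _ _ (mul_le_mul_of_nonneg_left hxy hpos.le)
      · exact ⟨mul_nonneg hpos.le hx.1, by rw [← hend]; exact mul_le_mul_of_nonneg_left hx.2 hpos.le⟩
      · exact ⟨mul_nonneg hpos.le hy.1, by rw [← hend]; exact mul_le_mul_of_nonneg_left hy.2 hpos.le⟩
    · show auxF r _ ≤ log 2
      unfold auxF
      have : log (1 - 2 * r * cos (h * (n + 1)) + r ^ 2) ≤ log (2 ^ 2) := by
        apply log_le_log (aux_pos h0 h1 _)
        nlinarith [neg_one_le_cos (h * (n + 1))]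
      rw [log_pow] at this
      push_cast at this
      linarith
  -- limit r → 1
  have hc : ∀ x : ℝ, 0 < x → x ≤ π → Filter.Tendsto (fun r => auxF r x) (nhdsWithin 1 (Set.Iio 1))
      (nhds (auxF 1 x)) := by
    intro x hx hx'
    have : ContinuousAt (fun r => auxF r x) 1 := by
      unfold auxF
      have : cos x < 1 := by
        rw [← cos_zero]
        exact strictAntiOn_cos ⟨le_rfl, hpi.le⟩ ⟨hx.le, hx'⟩ hx
      exact (ContinuousAt.log (by fun_prop) (by nlinarith)).div_const 2
    exact this.tendsto.mono_left nhdsWithin_le_nhds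
  have hle : ∀ t : ℝ, t ≤ m / 2 → h * t ≤ π := fun t ht => by
    rw [← hend]; exact mul_le_mul_of_nonneg_left ht hpos.le
  have hlim := le_of_tendsto (Filter.Tendsto.add
      (tendsto_finsetSum (range (n + 1)) (fun i hi => (hc (h * (i + 1)) (by positivity)
        (hle _ (by
          have : (i:ℝ) ≤ n := by exact_mod_cast Nat.lt_succ_iff.1 (mem_range.1 hi)
          linarith))).pow 2))
      ((((hc (h * (1/4)) (by positivity) (hle _ (by linarith))).min tendsto_const_nhds).pow 2 |>.sub
        (((hc (h * 1) (by positivity) (hle _ (by linarith))).min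
          tendsto_const_nhds).pow 2)).const_mul (1/4)))
    (Filter.mem_of_superset (Ioo_mem_nhdsLT (zero_lt_one)) key)
  have hx1 : auxF 1 (h * (1/4)) < 0 := by
    have hx4 : h * (1/4) ≤ π / 4 := by
      rw [hh, div_mul_eq_mul_div, div_le_iff₀ hm0]; nlinarith
    have c1 : cos (h * (1/4)) < 1 := by
      refine lt_of_lt_of_eq ?_ cos_zero
      exact strictAntiOn_cos ⟨le_rfl, hpi.le⟩ ⟨by positivity, by linarith⟩ (by positivity)
    have c2 : 1 / 2 < cos (h * (1/4)) := by
      rw [← cos_pi_div_three]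
      exact strictAntiOn_cos ⟨by positivity, by linarith⟩ ⟨by positivity, by linarith⟩ (by linarith)
    unfold auxF
    have := log_neg (x := 1 - 2 * 1 * cos (h * (1/4)) + 1 ^ 2) (by linarith) (by linarith)
    linarith
  have hx2 : auxF 1 (h * (1/4)) < auxF 1 (h * 1) := by
    have c1 : cos (h * (1/4)) < 1 := by
      refine lt_of_lt_of_eq ?_ cos_zero
      exact strictAntiOn_cos ⟨le_rfl, hpi.le⟩ ⟨by positivity, hle _ (by linarith)⟩ (by positivity)
    have c2 : cos (h * 1) < cos (h * (1/4)) :=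
      strictAntiOn_cos ⟨by positivity, hle _ (by linarith)⟩ ⟨by positivity, hle _ (by linarith)⟩
        (by linarith)
    unfold auxF
    have := log_lt_log (x := 1 - 2 * 1 * cos (h * (1/4)) + 1 ^ 2)
      (y := 1 - 2 * 1 * cos (h * 1) + 1 ^ 2) (by linarith) (by linarith)
    linarith
  have hgain : (min (auxF 1 (h * 1)) 0) ^ 2 < (min (auxF 1 (h * (1/4))) 0) ^ 2 := by
    rw [min_eq_left hx1.le]
    have a1 : auxF 1 (h * (1/4)) < min (auxF 1 (h * 1)) 0 := lt_min hx2 hx1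
    have a2 : min (auxF 1 (h * 1)) 0 ≤ 0 := min_le_right _ _
    nlinarith
  have hsum : ∑ k ∈ Finset.Icc 1 (m / 2), (Real.log (2 * Real.sin (π * k / m)))^2
      = ∑ i ∈ range (n + 1), auxF 1 (h * (i + 1)) ^ 2 := by
    rw [hn, ← Finset.Ico_add_one_right_eq_Icc, Finset.sum_Ico_eq_sum_range]
    apply sum_congr (by simp)
    intro i hi
    have hi' : (i:ℝ) ≤ n := by exact_mod_cast Nat.lt_succ_iff.1 (by simpa using hi)
    have e : h * ((i:ℝ) + 1) = 2 * (π * ((1 + i : ℕ) : ℝ) / m) := by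
      rw [hh]; push_cast; ring
    rw [e, aux_one]
  rw [hsum]
  linarith
end

section
/- For every integer m > 1, the sum over k from 1 to ⌊m/2⌋ of (log(2 sin(πk/m)))² is strictly greater than (π²/24)·m − 2.45 − (log m)². -/
open Real Finset

namespace SLS

open MeasureTheory Set

noncomputable def f (x : ℝ) : ℝ := Real.log (2 * Real.sin (π * x))

lemma sin_pos' {x : ℝ} (h0 : 0 < x) (h1 : x ≤ 1/2) : 0 < Real.sin (π * x) := by
  have := Real.pi_pos
  apply Real.sin_pos_of_pos_of_lt_pi
  · positivity
  · nlinarith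

lemma f_mono {x y : ℝ} (h0 : 0 < x) (hxy : x ≤ y) (h1 : y ≤ 1/2) : f x ≤ f y := by
  unfold f
  have hp := Real.pi_pos
  have := sin_pos' h0 (hxy.trans h1)
  apply Real.log_le_log (by positivity)
  have : Real.sin (π * x) ≤ Real.sin (π * y) := by
    apply Real.sin_le_sin_of_le_of_le_pi_div_two <;> nlinarith
  linarith

lemma f_sixth : f (1/6) = 0 := by
  unfold f
  rw [show π * (1/6) = π / 6 by ring, Real.sin_pi_div_six]; norm_num

lemma f_half : f (1/2) = Real.log 2 := by
  unfold f
  rw [show π * (1/2) = π / 2 by ring, Real.sin_pi_div_two]; norm_num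

lemma f_le_one {x : ℝ} (h0 : 1/6 ≤ x) (h1 : x ≤ 1/2) : (f x)^2 ≤ 1 := by
  have a := f_mono (by norm_num) h0 h1
  have b := f_mono (by linarith) h1 le_rfl
  rw [f_sixth] at a
  rw [f_half] at b
  have := Real.log_two_lt_d9
  nlinarith

lemma f_sq_le {x : ℝ} (h0 : 0 < x) (h1 : x ≤ 1/6) : (f x)^2 ≤ (1 + Real.log x)^2 := by
  have a := f_mono h0 h1 (by norm_num)
  rw [f_sixth] at a
  have b : 1 + Real.log x ≤ f x := by
    have : 1 + Real.log x = Real.log (Real.exp 1 * x) := by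
      rw [Real.log_mul (Real.exp_ne_zero _) h0.ne', Real.log_exp]
    rw [this]
    unfold f
    apply Real.log_le_log (by positivity)
    have h3 := Real.mul_le_sin (x := π * x) (by positivity) (by nlinarith [Real.pi_pos])
    have h4 : 2 / π * (π * x) = 2 * x := by field_simp
    have := Real.exp_one_lt_d9
    nlinarith
  nlinarith

lemma f_contOn {a : ℝ} (ha : 0 < a) : ContinuousOn f (Icc a (1/2)) := by
  unfold f
  apply ContinuousOn.log
  · fun_prop
  · intro x hx
    have := sin_pos' (ha.trans_le hx.1) hx.2
    positivity

lemma f_meas : Measurable f := by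
  unfold f
  exact Real.measurable_log.comp (by fun_prop)

noncomputable def G (x : ℝ) : ℝ := x * (Real.log x)^2 + x

lemma G_cont : ContinuousOn G (Ici 0) := by
  have h : ContinuousOn (fun x : ℝ => 4 * (√x * Real.log √x)^2 + x) (Ici 0) := by
    have := Real.continuous_mul_log.comp Real.continuous_sqrt
    have h2 : Continuous (fun x : ℝ => √x * Real.log √x) := this
    fun_prop
  apply h.congr
  intro x hx
  have hx : 0 ≤ x := hx
  simp only [G]
  rw [Real.log_sqrt hx, mul_pow, Real.sq_sqrt hx]
  ring

lemma G_deriv {x : ℝ} (hx : 0 < x) : HasDerivAt G ((1 + Real.log x)^2) x := by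
  have h := (((hasDerivAt_id x).mul ((Real.hasDerivAt_log hx.ne').pow 2)).add (hasDerivAt_id x))
  refine HasDerivAt.congr_deriv (f := G) h ?_
  simp
  field_simp
  ring

lemma logsq_int {a : ℝ} (ha : 0 < a) :
    IntervalIntegrable (fun x => (1 + Real.log x)^2) volume 0 a := by
  apply intervalIntegral.intervalIntegrable_deriv_of_nonneg (g := G)
  · rw [uIcc_of_le ha.le]; exact G_cont.mono (fun x hx => hx.1)
  · intro x hx
    rw [min_eq_left ha.le] at hx
    exact G_deriv hx.1
  · intro x hx; positivity

lemma logsq_val {a : ℝ} (ha : 0 < a) :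
    ∫ x in (0:ℝ)..a, (1 + Real.log x)^2 = a * (Real.log a)^2 + a := by
  rw [intervalIntegral.integral_eq_sub_of_hasDerivAt_of_le ha.le (f := G)
    (G_cont.mono (fun x hx => hx.1)) (fun x hx => G_deriv hx.1) (logsq_int ha)]
  simp [G]

lemma fsq_int_small {a : ℝ} (ha : 0 < a) (h : a ≤ 1/6) :
    IntervalIntegrable (fun x => (f x)^2) volume 0 a := by
  apply (logsq_int ha).mono_fun
  · exact (f_meas.pow_const 2).aestronglyMeasurable
  · rw [uIoc_of_le ha.le]
    filter_upwards [ae_restrict_mem measurableSet_Ioc] with x hx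
    rw [Real.norm_of_nonneg (by positivity), Real.norm_of_nonneg (by positivity)]
    exact f_sq_le hx.1 (hx.2.trans h)

lemma fsq_int_pos {a b : ℝ} (ha : 0 < a) (hab : a ≤ b) (h : b ≤ 1/2) :
    IntervalIntegrable (fun x => (f x)^2) volume a b := by
  apply ContinuousOn.intervalIntegrable_of_Icc hab
  exact ((f_contOn ha).pow 2).mono (Icc_subset_Icc le_rfl h)

lemma fsq_int : IntervalIntegrable (fun x => (f x)^2) volume 0 (1/2) :=
  (fsq_int_small (a := 1/6) (by norm_num) le_rfl).trans
    (fsq_int_pos (by norm_num) (by norm_num) le_rfl)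

lemma f_int : IntervalIntegrable f volume 0 (1/2) := by
  have h : IntervalIntegrable (fun x => 1 + (f x)^2) volume 0 (1/2) :=
    (intervalIntegrable_const (c := (1:ℝ))).add fsq_int
  apply h.mono_fun
  · exact f_meas.aestronglyMeasurable
  · filter_upwards with x
    rw [Real.norm_eq_abs, Real.norm_of_nonneg (by positivity), ← sq_abs (f x)]
    nlinarith [sq_nonneg (|f x| - 1), sq_nonneg (|f x|)]

noncomputable def c (n : ℕ) (x : ℝ) : ℝ := Real.cos (2 * n * (π * x))

@[fun_prop]
lemma c_cont (n : ℕ) : Continuous (c n) := by unfold c; fun_prop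

lemma c_integral {n : ℕ} (hn : n ≠ 0) : ∫ x in (0:ℝ)..(1/2), c n x = 0 := by
  have hn' : (n:ℝ) ≠ 0 := by exact_mod_cast hn
  have hd : ∀ x ∈ uIcc (0:ℝ) (1/2), HasDerivAt
      (fun x => Real.sin (2 * n * (π * x)) / (2 * n * π)) (c n x) x := by
    intro x _
    have h1 : HasDerivAt (fun x : ℝ => 2 * n * (π * x)) (2 * n * (π * 1)) x :=
      ((hasDerivAt_id x).const_mul π).const_mul _
    refine (h1.sin.div_const (2 * n * π)).congr_deriv ?_
    unfold c
    field_simp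
  rw [intervalIntegral.integral_eq_sub_of_hasDerivAt hd ((c_cont n).intervalIntegrable _ _)]
  rw [show 2 * (n:ℝ) * (π * (1/2)) = n * π by ring, Real.sin_nat_mul_pi]
  simp

lemma c_zero_integral : ∫ x in (0:ℝ)..(1/2), c 0 x = 1/2 := by
  simp [c]

lemma c_mul {n k : ℕ} (h : n ≤ k) (x : ℝ) : c n x * c k x = (c (k - n) x + c (k + n) x)/2 := by
  unfold c
  push_cast [h]
  rw [show 2 * ((k:ℝ) - n) * (π * x) = 2 * k * (π * x) - 2 * n * (π * x) by ring,
    show 2 * ((k:ℝ) + n) * (π * x) = 2 * k * (π * x) + 2 * n * (π * x) by ring,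
    Real.cos_sub, Real.cos_add]
  ring

lemma c_mul_integral {n k : ℕ} (h : n < k) : ∫ x in (0:ℝ)..(1/2), c n x * c k x = 0 := by
  simp_rw [c_mul h.le]
  rw [intervalIntegral.integral_div, intervalIntegral.integral_add
    ((c_cont _).intervalIntegrable _ _) ((c_cont _).intervalIntegrable _ _),
    c_integral (by omega), c_integral (by omega)]
  simp

lemma c_sq_integral {n : ℕ} (h : n ≠ 0) : ∫ x in (0:ℝ)..(1/2), c n x * c n x = 1/4 := by
  simp_rw [c_mul le_rfl]
  rw [intervalIntegral.integral_div, intervalIntegral.integral_add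
    ((c_cont _).intervalIntegrable _ _) ((c_cont _).intervalIntegrable _ _),
    Nat.sub_self, c_zero_integral, c_integral (by omega)]
  norm_num

noncomputable def D (n : ℕ) (x : ℝ) : ℝ := 2 * ∑ j ∈ Finset.range n, Real.cos ((2 * j + 1) * (π * x))

@[fun_prop]
lemma D_cont (n : ℕ) : Continuous (D n) := by unfold D; fun_prop

lemma sin_eq (n : ℕ) (x : ℝ) : Real.sin (2 * n * (π * x)) = Real.sin (π * x) * D n x := by
  unfold D
  induction n with
  | zero => simp
  | succ n ih =>
    rw [Finset.sum_range_succ, mul_add, mul_add, ← ih]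
    push_cast
    rw [show 2 * ((n:ℝ) + 1) * (π * x) = (2 * n + 1) * (π * x) + π * x by ring,
      show 2 * (n:ℝ) * (π * x) = (2 * n + 1) * (π * x) - π * x by ring,
      Real.sin_add, Real.sin_sub]
    ring

lemma cosD (n : ℕ) (x : ℝ) : Real.cos (π * x) * D n x
    = ∑ j ∈ Finset.range n, (c (j + 1) x + c j x) := by
  unfold D c
  rw [Finset.mul_sum, Finset.mul_sum]
  apply Finset.sum_congr rfl
  intro j _
  push_cast
  rw [show 2 * ((j:ℝ) + 1) * (π * x) = (2 * j + 1) * (π * x) + π * x by ring,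
      show 2 * (j:ℝ) * (π * x) = (2 * j + 1) * (π * x) - π * x by ring,
      Real.cos_add, Real.cos_sub]
  ring

lemma cosD_integral {n : ℕ} (hn : n ≠ 0) :
    ∫ x in (0:ℝ)..(1/2), Real.cos (π * x) * D n x = 1/2 := by
  simp_rw [cosD]
  rw [intervalIntegral.integral_finsetSum]
  · obtain ⟨n, rfl⟩ := Nat.exists_eq_succ_of_ne_zero hn
    have key : ∀ j, ∫ x in (0:ℝ)..(1/2), (c (j + 1) x + c j x) = if j = 0 then 1/2 else 0 := by
      intro j
      rw [intervalIntegral.integral_add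
        ((c_cont _).intervalIntegrable _ _) ((c_cont _).intervalIntegrable _ _),
        c_integral (by omega)]
      split_ifs with h
      · rw [h, c_zero_integral]; simp
      · rw [c_integral h]; simp
    simp_rw [key]
    simp
  · intro j _
    exact ((c_cont _).add (c_cont _)).intervalIntegrable _ _

lemma fc_int (n : ℕ) : IntervalIntegrable (fun x => f x * c n x) volume 0 (1/2) :=
  f_int.mul_continuousOn (c_cont n).continuousOn

lemma fc_integral {n : ℕ} (hn : n ≠ 0) :
    ∫ x in (0:ℝ)..(1/2), f x * c n x = - (1 / (4 * n)) := by
  have hn' : (n:ℝ) ≠ 0 := by exact_mod_cast hn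
  have hp := Real.pi_ne_zero
  let F : ℝ → ℝ := fun x => f x * Real.sin (2 * n * (π * x)) / (2 * n * π)
  have hF : Continuous F := by
    have h1 : Continuous (fun x : ℝ => (2 * Real.sin (π * x)) * Real.log (2 * Real.sin (π * x))) :=
      Real.continuous_mul_log.comp (g := fun x : ℝ => x * Real.log x)
        (f := fun x : ℝ => 2 * Real.sin (π * x)) (by fun_prop)
    have h2 : F = fun x => ((2 * Real.sin (π * x)) * Real.log (2 * Real.sin (π * x))) * D n x
        / 2 / (2 * n * π) := by
      funext x
      simp only [F]
      rw [sin_eq, f]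
      ring
    rw [h2]
    fun_prop
  have hd : ∀ x ∈ Ioo (0:ℝ) (1/2), HasDerivAt F
      (f x * c n x + (Real.cos (π * x) * D n x) / (2 * n)) x := by
    intro x hx
    have hs := (sin_pos' hx.1 hx.2.le).ne'
    have h1 : HasDerivAt (fun x : ℝ => 2 * n * (π * x)) (2 * n * (π * 1)) x :=
      ((hasDerivAt_id x).const_mul π).const_mul _
    have h0 : HasDerivAt (fun x : ℝ => (π * x)) (π * 1) x :=
      ((hasDerivAt_id x).const_mul π)
    have h2 : HasDerivAt f _ x := (h0.sin.const_mul 2).log (by positivity)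
    refine HasDerivAt.congr_deriv (f := F) ((h2.mul h1.sin).div_const (2 * n * π)) ?_
    rw [sin_eq]
    unfold c
    field_simp
    ring
  have hi2 : IntervalIntegrable (fun x => (Real.cos (π * x) * D n x) / (2 * n)) volume 0 (1/2) := by
    apply Continuous.intervalIntegrable
    fun_prop
  have h := intervalIntegral.integral_eq_sub_of_hasDerivAt_of_le (by norm_num) hF.continuousOn hd
    ((fc_int n).add hi2)
  rw [intervalIntegral.integral_add (fc_int n) hi2, intervalIntegral.integral_div,
    cosD_integral hn] at h
  have e : F (1/2) - F 0 = 0 := by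
    simp only [F]
    rw [show 2 * (n:ℝ) * (π * (1/2)) = n * π by ring, Real.sin_nat_mul_pi]
    simp
  rw [e] at h
  have : (1:ℝ) / 2 / (2 * n) = 1 / (4 * n) := by field_simp; norm_num
  linarith

noncomputable def g (N : ℕ) (x : ℝ) : ℝ := ∑ n ∈ Finset.range N, (1 / ((n:ℝ) + 1)) * c (n + 1) x

@[fun_prop]
lemma g_cont (n : ℕ) : Continuous (g n) := by unfold g; fun_prop

lemma g_c_integral (N : ℕ) : ∫ x in (0:ℝ)..(1/2), g N x * c (N + 1) x = 0 := by
  unfold g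
  simp_rw [Finset.sum_mul]
  rw [intervalIntegral.integral_finsetSum]
  · apply Finset.sum_eq_zero
    intro j hj
    simp_rw [mul_assoc]
    rw [intervalIntegral.integral_const_mul, c_mul_integral (by simpa using hj)]
    simp
  · intro j _
    apply Continuous.intervalIntegrable
    fun_prop

lemma r_int (N : ℕ) : IntervalIntegrable (fun x => (f x + g N x)^2) volume 0 (1/2) := by
  have h : IntervalIntegrable (fun x => (f x)^2 + (f x * (2 * g N x) + (g N x)^2)) volume 0 (1/2) := by
    apply fsq_int.add
    apply IntervalIntegrable.add
    · apply f_int.mul_continuousOn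
      fun_prop
    · apply Continuous.intervalIntegrable
      fun_prop
  convert h using 2
  ring

lemma r_val (N : ℕ) : ∫ x in (0:ℝ)..(1/2), (f x + g N x)^2
    = (∫ x in (0:ℝ)..(1/2), (f x)^2) - (∑ n ∈ Finset.range N, 1 / ((n:ℝ) + 1)^2) / 4 := by
  induction N with
  | zero => simp [g]
  | succ N ih =>
    have hN : (N:ℝ) + 1 ≠ 0 := by positivity
    have e : ∀ x, (f x + g (N+1) x)^2 = (f x + g N x)^2 + ((2 / ((N:ℝ)+1)) * (f x * c (N+1) x)
        + ((2 / ((N:ℝ)+1)) * (g N x * c (N+1) x)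
          + (1 / ((N:ℝ)+1)^2) * (c (N+1) x * c (N+1) x))) := by
      intro x
      have : g (N+1) x = g N x + (1 / ((N:ℝ) + 1)) * c (N + 1) x := by
        unfold g; rw [Finset.sum_range_succ]
      rw [this]
      field_simp
      ring
    simp_rw [e]
    have i1 := (fc_int (N+1)).const_mul (2 / ((N:ℝ)+1))
    have i2 : IntervalIntegrable (fun x => (2 / ((N:ℝ)+1)) * (g N x * c (N+1) x)) volume 0 (1/2) := by
      apply Continuous.intervalIntegrable
      fun_prop
    have i3 : IntervalIntegrable (fun x => (1 / ((N:ℝ)+1)^2) * (c (N+1) x * c (N+1) x))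
        volume 0 (1/2) := by
      apply Continuous.intervalIntegrable
      fun_prop
    rw [intervalIntegral.integral_add (r_int N) (i1.add (i2.add i3)),
      intervalIntegral.integral_add i1 (i2.add i3), intervalIntegral.integral_add i2 i3, ih,
      intervalIntegral.integral_const_mul, intervalIntegral.integral_const_mul,
      intervalIntegral.integral_const_mul, g_c_integral, c_sq_integral (by omega),
      fc_integral (by omega), Finset.sum_range_succ]
    push_cast
    field_simp
    ring

lemma integral_ge : π^2 / 24 ≤ ∫ x in (0:ℝ)..(1/2), (f x)^2 := by
  have h := (hasSum_nat_add_iff' 1).mpr hasSum_zeta_two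
  have h2 := h.tendsto_sum_nat
  have h3 : ∀ N : ℕ, ∑ n ∈ Finset.range N, 1 / (((n + 1 : ℕ):ℝ))^2
      ≤ 4 * ∫ x in (0:ℝ)..(1/2), (f x)^2 := by
    intro N
    have a := r_val N
    have b : 0 ≤ ∫ x in (0:ℝ)..(1/2), (f x + g N x)^2 :=
      intervalIntegral.integral_nonneg (by norm_num) (fun x _ => by positivity)
    push_cast
    linarith
  have h4 := le_of_tendsto' h2 h3
  simp at h4
  linarith

lemma step {a b : ℝ} (ha : 0 < a) (hab : a ≤ b) (hb : b ≤ 1/2) :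
    ∫ x in a..b, (f x)^2 ≤ (b - a) * ((min (f a) 0)^2 + (max (f b) 0)^2) := by
  have : ∫ x in a..b, (f x)^2 ≤ ∫ x in a..b, ((min (f a) 0)^2 + (max (f b) 0)^2) := by
    apply intervalIntegral.integral_mono_on hab (fsq_int_pos ha hab hb)
      intervalIntegrable_const
    intro x hx
    have h1 := f_mono ha hx.1 (hx.2.trans hb)
    have h2 := f_mono (ha.trans_le hx.1) hx.2 hb
    rcases le_total (f x) 0 with h | h
    · rw [min_eq_left (h1.trans h)]
      nlinarith [sq_nonneg (max (f b) 0)]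
    · rw [max_eq_left (h.trans h2)]
      nlinarith [sq_nonneg (min (f a) 0)]
  rwa [intervalIntegral.integral_const, smul_eq_mul] at this

lemma sum_ge (m : ℕ) (hm : 0 < m) (n : ℕ) (hn : (n + 1) * 2 ≤ m) :
    m * (∫ x in (1 / (m:ℝ))..(((n + 1 : ℕ):ℝ) / m), (f x)^2) + (min (f (((n + 1 : ℕ):ℝ) / m)) 0)^2
      ≤ ∑ k ∈ Finset.Icc 1 (n + 1), (f ((k:ℝ) / m))^2 := by
  have hm' : (0:ℝ) < m := by exact_mod_cast hm
  have key : ∀ y : ℝ, y^2 = (min y 0)^2 + (max y 0)^2 := by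
    intro y
    rcases le_total y 0 with h | h <;> simp [h]
  induction n with
  | zero =>
    simp
    rw [key (f (m:ℝ)⁻¹)]
    nlinarith [sq_nonneg (max (f (m:ℝ)⁻¹) 0)]
  | succ n ih =>
    have ih := ih (by omega)
    rw [Finset.sum_Icc_succ_top (by omega), key (f (((n + 1 + 1 : ℕ):ℝ) / m))]
    have hn' : ((n:ℝ) + 1 + 1) * 2 ≤ m := by exact_mod_cast hn
    have hpos : 0 < ((n + 1 : ℕ):ℝ) / m := by positivity
    have hle : ((n + 1 : ℕ):ℝ) / m ≤ ((n + 1 + 1 : ℕ):ℝ) / m := by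
      gcongr; omega
    have hh : ((n + 1 + 1 : ℕ):ℝ) / m ≤ 1/2 := by
      push_cast
      rw [div_le_div_iff₀ hm' (by norm_num)]; linarith
    have h1 : 1 / (m:ℝ) ≤ ((n + 1 : ℕ):ℝ) / m := by
      gcongr; push_cast; linarith [(Nat.cast_nonneg n : (0:ℝ) ≤ n)]
    have s := step hpos hle hh
    have hd : ((n + 1 + 1 : ℕ):ℝ) / m - ((n + 1 : ℕ):ℝ) / m = 1 / m := by
      push_cast; ring
    rw [hd] at s
    have s2 := mul_le_mul_of_nonneg_left s hm'.le
    rw [← mul_assoc, mul_one_div_cancel hm'.ne', one_mul] at s2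
    rw [← intervalIntegral.integral_add_adjacent_intervals
      (fsq_int_pos (by positivity) h1 (hle.trans hh)) (fsq_int_pos hpos hle hh)]
    linarith

end SLS

theorem sum_log_sq_sin_lower (m : ℕ) (hm : 1 < m) :
    ∑ k ∈ Finset.Icc 1 (m / 2), (Real.log (2 * Real.sin (π * k / m)))^2
      > π^2 / 24 * m - 2.45 - (Real.log m)^2 := by
  rcases le_or_gt m 5 with h5 | h5
  · have h0 : 0 ≤ ∑ k ∈ Finset.Icc 1 (m / 2), (Real.log (2 * Real.sin (π * k / m)))^2 :=
      Finset.sum_nonneg (fun _ _ => by positivity)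
    have h1 : (m:ℝ) ≤ 5 := by exact_mod_cast h5
    have h2 := Real.pi_lt_d2
    have h3 := Real.pi_pos
    have h4 : π^2 < 10 := by nlinarith
    have h6 : π^2 / 24 * m ≤ 10 / 24 * 5 := by gcongr
    have := sq_nonneg (Real.log m)
    norm_num at *
    linarith
  · obtain ⟨n, hn⟩ : ∃ n, m / 2 = n + 1 := ⟨m / 2 - 1, by omega⟩
    have hm' : (0:ℝ) < m := by positivity
    have hm6 : (6:ℝ) ≤ m := by exact_mod_cast h5
    have hs := SLS.sum_ge m (by omega) n (by omega)
    rw [hn]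
    have e : ∑ k ∈ Finset.Icc 1 (n + 1), (Real.log (2 * Real.sin (π * k / m)))^2
        = ∑ k ∈ Finset.Icc 1 (n + 1), (SLS.f ((k:ℝ) / m))^2 := by
      unfold SLS.f
      simp_rw [mul_div_assoc]
    rw [e]
    set b : ℝ := ((n + 1 : ℕ):ℝ) / m with hb
    have hle : (((n + 1 : ℕ):ℝ)) * 2 ≤ m := by exact_mod_cast (by omega : (n + 1) * 2 ≤ m)
    have hge : (m:ℝ) ≤ (((n + 1 : ℕ):ℝ)) * 2 + 1 := by
      exact_mod_cast (by omega : m ≤ (n + 1) * 2 + 1)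
    have hb1 : b ≤ 1/2 := by
      rw [hb, div_le_div_iff₀ hm' (by norm_num)]; linarith
    have hb0 : 1/6 ≤ b := by
      rw [hb, div_le_div_iff₀ (by norm_num) hm']; linarith
    have ha0 : 0 < 1 / (m:ℝ) := by positivity
    have ha1 : 1 / (m:ℝ) ≤ 1/6 := by gcongr
    have hbm : m * (1/2 - b) ≤ 1/2 := by
      rw [hb, mul_sub, mul_div_cancel₀ _ hm'.ne']; linarith
    have I1 := SLS.fsq_int_small ha0 ha1
    have I2 := SLS.fsq_int_pos ha0 (ha1.trans hb0) hb1
    have I3 := SLS.fsq_int_pos (by linarith) hb1 le_rfl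
    have hI := SLS.integral_ge
    rw [← intervalIntegral.integral_add_adjacent_intervals (I1.trans I2) I3,
      ← intervalIntegral.integral_add_adjacent_intervals I1 I2] at hI
    have J1 : ∫ x in (0:ℝ)..(1 / (m:ℝ)), (SLS.f x)^2 ≤ (1 / m) * ((Real.log m)^2 + 1) := by
      have : ∫ x in (0:ℝ)..(1 / (m:ℝ)), (SLS.f x)^2
          ≤ ∫ x in (0:ℝ)..(1 / (m:ℝ)), (1 + Real.log x)^2 := by
        apply intervalIntegral.integral_mono_on_of_le_Ioo ha0.le I1 (SLS.logsq_int ha0)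
        intro x hx
        exact SLS.f_sq_le hx.1 (hx.2.le.trans ha1)
      rw [SLS.logsq_val ha0] at this
      rw [one_div, Real.log_inv] at this
      rw [one_div]
      linarith
    have J3 : ∫ x in b..(1/2), (SLS.f x)^2 ≤ 1/2 - b := by
      have : ∫ x in b..(1/2), (SLS.f x)^2 ≤ ∫ x in b..(1/2), (1:ℝ) := by
        apply intervalIntegral.integral_mono_on hb1 I3 intervalIntegrable_const
        intro x hx
        exact SLS.f_le_one (hb0.trans hx.1) hx.2
      simpa using this
    have K := mul_le_mul_of_nonneg_left (hI.trans (add_le_add (add_le_add J1 le_rfl) J3)) hm'.le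
    rw [mul_add, mul_add, ← mul_assoc (m:ℝ) (1 / (m:ℝ)), mul_one_div_cancel hm'.ne', one_mul] at K
    have := sq_nonneg (min (SLS.f b) 0)
    norm_num at *
    linarith
end

section
/- As m → ∞, the sum over k from 1 to ⌊m/2⌋ of (log(2 sin(πk/m)))² is asymptotic to (π²/24)·m, i.e., the ratio of the sum to (π²/24)·m tends to 1. -/
open Real Finset Filter

lemma aux_log_bound {s u : ℝ} (hu : 0 < u) (hus : u ≤ s / 2) (hs : s ≤ 2) :
    (|Real.log s| + π) ^ 2 ≤ 81 * u ^ (-(1/2) : ℝ) := by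
  have ht : 0 < s / 2 := by linarith
  have ht1 : s / 2 ≤ 1 := by linarith
  have h1 := Real.abs_log_mul_self_rpow_lt (s/2) (1/4) ht ht1 (by norm_num)
  have h1u : 0 < u ^ (1/4 : ℝ) := Real.rpow_pos_of_pos hu _
  have hut : u ^ (1/4 : ℝ) ≤ (s/2) ^ (1/4 : ℝ) := Real.rpow_le_rpow hu.le hus (by norm_num)
  have hu1 : u ^ (1/4 : ℝ) ≤ 1 := Real.rpow_le_one hu.le (by linarith) (by norm_num)
  rw [abs_mul, abs_of_pos (lt_of_lt_of_le h1u hut)] at h1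
  have h2 : Real.log s = Real.log (s/2) + Real.log 2 := by
    rw [← Real.log_mul ht.ne' (by norm_num)]; congr 1; ring
  have h3 : |Real.log s| ≤ |Real.log (s/2)| + 0.7 := by
    rw [h2]
    refine (abs_add_le _ _).trans ?_
    rw [abs_of_pos (Real.log_pos (by norm_num : (1:ℝ) < 2))]
    linarith [Real.log_two_lt_d9]
  have h4 : (|Real.log s| + π) * u ^ (1/4 : ℝ) ≤ 9 := by
    have h5 : |Real.log (s/2)| * u ^ (1/4 : ℝ) ≤ 4 := by
      have := mul_le_mul_of_nonneg_left hut (abs_nonneg (Real.log (s/2)))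
      norm_num at h1 this ⊢
      linarith
    have : (|Real.log s| + π) ≤ |Real.log (s/2)| + 4 := by linarith [Real.pi_lt_d2]
    nlinarith [mul_le_mul_of_nonneg_right this h1u.le]
  have h6 : u ^ (-(1/2) : ℝ) = ((u ^ (1/4 : ℝ)) ^ 2)⁻¹ := by
    rw [Real.rpow_neg hu.le, ← Real.rpow_natCast, ← Real.rpow_mul hu.le]; norm_num
  rw [h6, ← div_eq_mul_inv, le_div_iff₀ (by positivity), ← mul_pow]
  have : 0 ≤ (|Real.log s| + π) * u ^ (1/4 : ℝ) := by positivity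
  nlinarith

lemma aux_sin {x : ℝ} (h0 : 0 ≤ x) (h1 : x ≤ 1/2) : 2 * x ≤ Real.sin (π * x) := by
  have := Real.mul_le_sin (x := π * x) (by positivity) (by nlinarith [Real.pi_pos])
  have h : 2 / π * (π * x) = 2 * x := by field_simp
  linarith

lemma aux_sin' {x : ℝ} (h0 : 1/2 ≤ x) (h1 : x ≤ 1) : 2 * (1 - x) ≤ Real.sin (π * x) := by
  have := aux_sin (x := 1 - x) (by linarith) (by linarith)
  rwa [show π * (1 - x) = π - π * x by ring, Real.sin_pi_sub] at this

lemma aux_full {s x : ℝ} (h0 : 0 < x) (h1 : x < 1) (hs : Real.sin (π * x) ≤ s) (hs2 : s ≤ 2) :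
    (|Real.log s| + π) ^ 2 ≤ 81 * (x ^ (-(1/2) : ℝ) + (1 - x) ^ (-(1/2) : ℝ)) := by
  have a : 0 < x ^ (-(1/2) : ℝ) := Real.rpow_pos_of_pos h0 _
  have b : 0 < (1 - x) ^ (-(1/2) : ℝ) := Real.rpow_pos_of_pos (by linarith) _
  rcases le_total x (1/2) with h | h
  · have := aux_log_bound (s := s) h0 (by linarith [aux_sin h0.le h]) hs2
    linarith
  · have := aux_log_bound (s := s) (u := 1 - x) (by linarith) (by linarith [aux_sin' h h1.le]) hs2
    linarith

lemma aux_g_int : IntervalIntegrable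
    (fun x : ℝ => 81 * (x ^ (-(1/2) : ℝ) + (1 - x) ^ (-(1/2) : ℝ))) MeasureTheory.volume 0 1 := by
  have h : IntervalIntegrable (fun x : ℝ => x ^ (-(1/2) : ℝ)) MeasureTheory.volume 0 1 :=
    intervalIntegral.intervalIntegrable_rpow' (by norm_num)
  have h2 := (h.comp_sub_left 1).symm
  simp only [sub_zero, sub_self] at h2
  exact (h.add h2).const_mul 81

lemma aux_ae {P : ℝ → Prop} (h : ∀ x, 0 < x → x < 1 → x ≠ 1/2 → P x) :
    ∀ᵐ x ∂(MeasureTheory.volume : MeasureTheory.Measure ℝ), x ∈ Set.uIoc (0:ℝ) 1 → P x := by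
  have e1 := MeasureTheory.Measure.ae_ne MeasureTheory.volume (1:ℝ)
  have e2 := MeasureTheory.Measure.ae_ne MeasureTheory.volume (1/2:ℝ)
  filter_upwards [e1, e2] with x h1 h2 hx
  rw [Set.uIoc_of_le zero_le_one] at hx
  exact h x hx.1 (lt_of_le_of_ne hx.2 h1) h2

lemma aux_riemann (h : ℝ → ℝ) (hm : Measurable h)
    (hc : ∀ x, 0 < x → x < 1 → x ≠ 1/2 → ContinuousAt h x)
    (hb : ∀ y, 0 < y → |h y| ≤ 81 * y ^ (-(1/2) : ℝ)) :
    Tendsto (fun m : ℕ => (∑ k ∈ Finset.range m, h ((k + 1 : ℕ) / m)) / m) atTop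
      (nhds (∫ x in (0:ℝ)..1, h x)) := by
  have key : Tendsto (fun m : ℕ => ∫ x in (0:ℝ)..1, h ((⌈x * m⌉₊ : ℝ) / m)) atTop
      (nhds (∫ x in (0:ℝ)..1, h x)) := by
    apply intervalIntegral.tendsto_integral_filter_of_dominated_convergence
      (fun x : ℝ => 81 * x ^ (-(1/2) : ℝ))
    · refine Eventually.of_forall fun m => Measurable.aestronglyMeasurable ?_
      fun_prop
    · filter_upwards [eventually_gt_atTop 0] with m hm0
      apply aux_ae
      intro x hx0 hx1 _
      have hm' : (0:ℝ) < m := by exact_mod_cast hm0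
      have hle : x ≤ (⌈x * m⌉₊ : ℝ) / m := by
        rw [le_div_iff₀ hm']; exact Nat.le_ceil _
      rw [Real.norm_eq_abs]
      refine (hb _ (by linarith)).trans ?_
      have := Real.rpow_le_rpow_of_nonpos hx0 hle (by norm_num : (-(1/2):ℝ) ≤ 0)
      linarith
    · exact (intervalIntegral.intervalIntegrable_rpow' (by norm_num)).const_mul 81
    · apply aux_ae
      intro x hx0 hx1 hx2
      have := (tendsto_nat_ceil_mul_div_atTop (R := ℝ) hx0.le).comp tendsto_natCast_atTop_atTop
      exact (hc x hx0 hx1 hx2).tendsto.comp this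
  refine key.congr' ?_
  filter_upwards [eventually_gt_atTop 0] with m hm0
  have hm' : (0:ℝ) < m := by exact_mod_cast hm0
  have hpiece : ∀ k : ℕ, Set.EqOn (fun x : ℝ => h ((⌈x * m⌉₊ : ℝ) / m))
      (fun _ => h ((k + 1 : ℕ) / m)) (Set.uIoc ((k:ℕ) / m : ℝ) ((k + 1 : ℕ) / m)) := by
    intro k x hx
    rw [Set.uIoc_of_le (by gcongr; simp)] at hx
    have : ⌈x * m⌉₊ = k + 1 := by
      rw [Nat.ceil_eq_iff (by simp)]
      have h1 := (div_lt_iff₀ hm').1 hx.1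
      have h2 := (le_div_iff₀ hm').1 hx.2
      exact ⟨by simpa using h1, h2⟩
    simp only [this]
  have hsum := intervalIntegral.sum_integral_adjacent_intervals (μ := MeasureTheory.volume)
    (f := fun x : ℝ => h ((⌈x * m⌉₊ : ℝ) / m))
    (a := fun k : ℕ => (k / m : ℝ)) (n := m) (by
      intro k _
      exact (intervalIntegrable_const (c := h ((k + 1 : ℕ) / m))).congr (hpiece k).symm)
  simp only [Nat.cast_zero, zero_div, div_self hm'.ne'] at hsum
  rw [← hsum, Finset.sum_div]
  refine Finset.sum_congr rfl fun k _ => ?_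
  rw [intervalIntegral.integral_congr_ae (Eventually.of_forall fun x hx => hpiece k hx),
    intervalIntegral.integral_const]
  push_cast
  rw [smul_eq_mul]; field_simp; ring

lemma aux_norm (r x : ℝ) : ‖1 - circleMap 0 r (2 * π * x)‖ ^ 2
    = (1 - r) ^ 2 + 4 * r * Real.sin (π * x) ^ 2 := by
  rw [← Complex.normSq_eq_norm_sq, Complex.normSq_apply]
  have e : circleMap 0 r (2 * π * x) = ⟨r * Real.cos (2 * π * x), r * Real.sin (2 * π * x)⟩ := by
    apply Complex.ext <;> simp [circleMap, Complex.exp_re, Complex.exp_im]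
  rw [e]
  simp only [Complex.sub_re, Complex.sub_im, Complex.one_re, Complex.one_im]
  have h1 := Real.cos_two_mul (π * x)
  have h2 := Real.sin_sq_add_cos_sq (π * x)
  have h3 := Real.sin_sq_add_cos_sq (2 * π * x)
  rw [← mul_assoc, mul_comm, ← mul_assoc] at h1
  rw [show x * 2 * π = 2 * π * x by ring] at h1
  have h4 : Real.cos (2 * π * x) = 1 - 2 * Real.sin (π * x) ^ 2 := by
    rw [show 2 * π * x = 2 * (π * x) by ring, Real.cos_two_mul]; linarith
  linear_combination r ^ 2 * h3 - 2 * r * h4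

lemma aux_one_s2 {x : ℝ} (h0 : 0 < x) (h1 : x < 1) :
    Complex.log (1 - circleMap 0 1 (2 * π * x)) =
      (Real.log (2 * Real.sin (π * x)) : ℝ) + ((π * x - π / 2 : ℝ) : ℂ) * Complex.I := by
  have hs : 0 < Real.sin (π * x) :=
    Real.sin_pos_of_pos_of_lt_pi (by positivity) (by nlinarith [Real.pi_pos])
  have hp := Real.pi_pos
  have e : 1 - circleMap 0 1 (2 * π * x) = ((2 * Real.sin (π * x) : ℝ) : ℂ) *
      Complex.exp (((π * x - π / 2 : ℝ) : ℂ) * Complex.I) := by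
    have h4 : Real.cos (2 * (π * x)) = 1 - 2 * Real.sin (π * x) ^ 2 := by
      rw [Real.cos_two_mul]; linarith [Real.sin_sq_add_cos_sq (π * x)]
    have h5 := Real.sin_two_mul (π * x)
    have e' : circleMap 0 1 (2 * π * x)
        = ⟨Real.cos (2 * (π * x)), Real.sin (2 * (π * x))⟩ := by
      apply Complex.ext <;> simp [circleMap, Complex.exp_re, Complex.exp_im, mul_assoc]
    rw [e', h4, h5, Complex.exp_mul_I, ← Complex.ofReal_cos, ← Complex.ofReal_sin,
      Real.cos_sub_pi_div_two, Real.sin_sub_pi_div_two]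
    apply Complex.ext
    · simp only [Complex.sub_re, Complex.one_re, Complex.re_ofReal_mul, Complex.add_re,
        Complex.ofReal_re, Complex.I_re, mul_zero]
      ring
    · simp only [Complex.sub_im, Complex.one_im, Complex.im_ofReal_mul, Complex.add_im,
        Complex.ofReal_im, Complex.I_im, mul_zero, mul_one]
      ring
  rw [e, Complex.log_ofReal_mul (by positivity) (Complex.exp_ne_zero _), Complex.log_exp]
  · simp; nlinarith
  · simp; nlinarith

lemma aux_f_int : IntervalIntegrable (fun x : ℝ => (Real.log (2 * Real.sin (π * x))) ^ 2)
    MeasureTheory.volume 0 1 := by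
  refine aux_g_int.mono_fun' (Measurable.aestronglyMeasurable (by fun_prop)) ?_
  refine (MeasureTheory.ae_restrict_iff' measurableSet_uIoc).2 (aux_ae ?_)
  intro x h0 h1 _
  have hs : 0 < Real.sin (π * x) :=
    Real.sin_pos_of_pos_of_lt_pi (by positivity) (by nlinarith [Real.pi_pos])
  have := aux_full (s := 2 * Real.sin (π * x)) h0 h1 (by linarith)
    (by linarith [Real.sin_le_one (π * x)])
  refine le_trans ?_ this
  change ‖Real.log (2 * Real.sin (π * x)) ^ 2‖ ≤ _
  rw [Real.norm_eq_abs, abs_of_nonneg (sq_nonneg _), ← sq_abs]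
  have := Real.pi_pos
  gcongr
  linarith

lemma aux_mean {r : ℝ} (h0 : 0 < r) (h1 : r < 1) :
    ∫ x in (0:ℝ)..1, (Complex.log (1 - circleMap 0 r (2 * π * x))) ^ 2 = 0 := by
  have hd : DifferentiableOn ℂ (fun z : ℂ => Complex.log (1 - z) ^ 2) (Metric.ball 0 1) := by
    intro z hz
    apply DifferentiableAt.differentiableWithinAt
    apply DifferentiableAt.pow
    apply DifferentiableAt.clog (by fun_prop)
    left
    have : ‖z‖ < 1 := by simpa using hz
    have := Complex.re_le_norm z
    simp; linarith
  have hd2 : DiffContOnCl ℂ (fun z : ℂ => Complex.log (1 - z) ^ 2) (Metric.ball 0 |r|) := by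
    apply DifferentiableOn.diffContOnCl
    apply hd.mono
    rw [closure_ball _ (by rw [abs_of_pos h0]; exact h0.ne'), abs_of_pos h0]
    exact Metric.closedBall_subset_ball h1
  have := hd2.circleAverage
  rw [Real.circleAverage_def] at this
  simp only [sub_zero, Complex.log_one] at this
  have hp := Real.pi_pos
  have h3 := intervalIntegral.integral_comp_mul_left (a := 0) (b := 1)
    (fun t : ℝ => (Complex.log (1 - circleMap 0 r t)) ^ 2) (c := 2 * π) (by positivity)
  rw [h3, mul_zero, mul_one, this]
  norm_num

lemma aux_lim :
    ∫ x in (0:ℝ)..1, (Complex.log (1 - circleMap 0 1 (2 * π * x))) ^ 2 = 0 := by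
  have key : Tendsto (fun r : ℝ => ∫ x in (0:ℝ)..1,
      (Complex.log (1 - circleMap 0 r (2 * π * x))) ^ 2) (nhdsWithin 1 (Set.Iio 1))
      (nhds (∫ x in (0:ℝ)..1, (Complex.log (1 - circleMap 0 1 (2 * π * x))) ^ 2)) := by
    apply intervalIntegral.tendsto_integral_filter_of_dominated_convergence
      (fun x : ℝ => 81 * (x ^ (-(1/2) : ℝ) + (1 - x) ^ (-(1/2) : ℝ)))
    · refine Eventually.of_forall fun m => Measurable.aestronglyMeasurable ?_
      unfold circleMap
      fun_prop
    · filter_upwards [Ioo_mem_nhdsLT (show (1/2:ℝ) < 1 by norm_num)] with r hr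
      apply aux_ae
      intro x h0 h1 _
      have hs : 0 < Real.sin (π * x) :=
        Real.sin_pos_of_pos_of_lt_pi (by positivity) (by nlinarith [Real.pi_pos])
      have hn := aux_norm r x
      have hr1 := hr.1
      have hr2 := hr.2
      have hs1 := Real.sin_le_one (π * x)
      refine le_trans ?_ (aux_full (s := ‖1 - circleMap 0 r (2 * π * x)‖) h0 h1 ?_ ?_)
      · rw [norm_pow]
        gcongr
        refine (Complex.norm_le_abs_re_add_abs_im _).trans ?_
        rw [Complex.log_re, Complex.log_im]
        gcongr
        exact Complex.abs_arg_le_pi _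
      · refine (sq_le_sq₀ hs.le (norm_nonneg _)).1 ?_
        rw [hn]
        nlinarith [pow_pos hs 2, sq_nonneg (1 - r)]
      · refine (norm_sub_le _ _).trans ?_
        simp [abs_of_pos (show 0 < r by linarith)]
        linarith
    · exact aux_g_int
    · apply aux_ae
      intro x h0 h1 _
      have hs : 0 < Real.sin (π * x) :=
        Real.sin_pos_of_pos_of_lt_pi (by positivity) (by nlinarith [Real.pi_pos])
      have : ContinuousAt (fun r : ℝ => (Complex.log (1 - circleMap 0 r (2 * π * x))) ^ 2) 1 := by
        apply ContinuousAt.pow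
        apply ContinuousAt.clog
        · unfold circleMap; fun_prop
        · left
          have h4 : Real.cos (2 * π * x) = 1 - 2 * Real.sin (π * x) ^ 2 := by
            rw [show 2 * π * x = 2 * (π * x) by ring, Real.cos_two_mul]
            linarith [Real.sin_sq_add_cos_sq (π * x)]
          have e : (circleMap 0 1 (2 * π * x)).re = Real.cos (2 * π * x) := by
            simp [circleMap, Complex.exp_re]
          rw [Complex.sub_re, e, h4, Complex.one_re]
          have := pow_pos hs 2
          linarith
      exact this.tendsto.mono_left nhdsWithin_le_nhds
  refine tendsto_nhds_unique key ?_
  refine tendsto_const_nhds.congr' ?_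
  filter_upwards [Ioo_mem_nhdsLT (show (1/2:ℝ) < 1 by norm_num)] with r hr
  exact (aux_mean (by linarith [hr.1]) hr.2).symm

lemma aux_int_full :
    ∫ x in (0:ℝ)..1, (Real.log (2 * Real.sin (π * x))) ^ 2 = π ^ 2 / 12 := by
  have hq : ∫ x in (0:ℝ)..1, (π * x - π / 2) ^ 2 = π ^ 2 / 12 := by
    have : ∀ x : ℝ, (π * x - π / 2) ^ 2 = π ^ 2 * (x - 1/2) ^ 2 := fun x => by ring
    simp only [this]
    rw [intervalIntegral.integral_const_mul,
      intervalIntegral.integral_comp_sub_right (fun x : ℝ => x ^ 2), integral_pow]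
    ring
  have h := aux_lim
  have hcongr : ∀ᵐ x ∂(MeasureTheory.volume : MeasureTheory.Measure ℝ), x ∈ Set.uIoc (0:ℝ) 1 →
      (Complex.log (1 - circleMap 0 1 (2 * π * x))) ^ 2 =
      (((Real.log (2 * Real.sin (π * x))) ^ 2 - (π * x - π / 2) ^ 2 : ℝ) : ℂ) +
      ((2 * Real.log (2 * Real.sin (π * x)) * (π * x - π / 2) : ℝ) : ℂ) * Complex.I := by
    apply aux_ae
    intro x h0 h1 _
    rw [aux_one_s2 h0 h1]
    push_cast
    linear_combination ((π:ℂ) * x - π / 2) ^ 2 * Complex.I_sq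
  have hL : IntervalIntegrable (fun x : ℝ => 2 * Real.log (2 * Real.sin (π * x)) * (π * x - π / 2))
      MeasureTheory.volume 0 1 := by
    have hc : IntervalIntegrable (fun x : ℝ => (π * x - π / 2) ^ 2) MeasureTheory.volume 0 1 :=
      Continuous.intervalIntegrable (by fun_prop) _ _
    refine (aux_f_int.add hc).mono_fun' (Measurable.aestronglyMeasurable (by fun_prop)) ?_
    refine Eventually.of_forall fun x => ?_
    beta_reduce
    rw [Real.norm_eq_abs, abs_le]
    constructor
    · nlinarith [sq_nonneg (Real.log (2 * Real.sin (π * x)) + (π * x - π / 2))]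
    · nlinarith [sq_nonneg (Real.log (2 * Real.sin (π * x)) - (π * x - π / 2))]
  have hc : IntervalIntegrable (fun x : ℝ => (π * x - π / 2) ^ 2) MeasureTheory.volume 0 1 :=
      Continuous.intervalIntegrable (by fun_prop) _ _
  have hR := aux_f_int.sub hc
  have hof : ∀ f : ℝ → ℝ, IntervalIntegrable f MeasureTheory.volume 0 1 →
      IntervalIntegrable (fun x => (f x : ℂ)) MeasureTheory.volume 0 1 :=
    fun f hf => ⟨hf.1.ofReal, hf.2.ofReal⟩
  rw [intervalIntegral.integral_congr_ae hcongr, intervalIntegral.integral_add (hof _ hR)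
    ((hof _ hL).mul_const _), intervalIntegral.integral_mul_const, intervalIntegral.integral_ofReal,
    intervalIntegral.integral_ofReal] at h
  have h2 := congrArg Complex.re h
  simp only [Complex.add_re, Complex.ofReal_re, Complex.re_ofReal_mul, Complex.I_re, mul_zero,
    add_zero, Complex.zero_re] at h2
  rw [intervalIntegral.integral_sub aux_f_int hc, hq] at h2
  linarith

lemma aux_int_half :
    ∫ x in (0:ℝ)..(1/2), (Real.log (2 * Real.sin (π * x))) ^ 2 = π ^ 2 / 24 := by
  have hsub : ∫ x in (1/2:ℝ)..1, (Real.log (2 * Real.sin (π * x))) ^ 2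
      = ∫ x in (0:ℝ)..(1/2), (Real.log (2 * Real.sin (π * x))) ^ 2 := by
    have := intervalIntegral.integral_comp_sub_left (a := 0) (b := 1/2)
      (fun x : ℝ => (Real.log (2 * Real.sin (π * x))) ^ 2) 1
    rw [show (1:ℝ) - 1/2 = 1/2 by norm_num, sub_zero] at this
    rw [← this]
    refine intervalIntegral.integral_congr fun x _ => ?_
    simp only [show π * (1 - x) = π - π * x by ring, Real.sin_pi_sub]
  have hadd := intervalIntegral.integral_add_adjacent_intervals
    (aux_f_int.mono_set (c := 0) (d := 1/2) (by
      rw [Set.uIcc_of_le (by norm_num), Set.uIcc_of_le (by norm_num)]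
      exact Set.Icc_subset_Icc (by norm_num) (by norm_num)))
    (aux_f_int.mono_set (c := 1/2) (d := 1) (by
      rw [Set.uIcc_of_le (by norm_num), Set.uIcc_of_le (by norm_num)]
      exact Set.Icc_subset_Icc (by norm_num) (by norm_num)))
  rw [hsub, aux_int_full] at hadd
  linarith

theorem sum_log_sq_sin_asymptotic :
    Tendsto (fun m : ℕ =>
        (∑ k ∈ Finset.Icc 1 (m / 2), (Real.log (2 * Real.sin (π * k / m)))^2)
          / (π^2 / 24 * m)) atTop (nhds 1) := by
  set h : ℝ → ℝ := (Set.Iic (1/2 : ℝ)).indicator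
    (fun x => (Real.log (2 * Real.sin (π * x))) ^ 2) with hh
  have hmeas : Measurable h := Measurable.indicator (by fun_prop) measurableSet_Iic
  have hR := aux_riemann h hmeas (by
      intro x h0 h1 hx
      rcases lt_or_gt_of_ne hx with hx | hx
      · have hs : 0 < Real.sin (π * x) :=
          Real.sin_pos_of_pos_of_lt_pi (by positivity) (by nlinarith [Real.pi_pos])
        have : ContinuousAt (fun x => (Real.log (2 * Real.sin (π * x))) ^ 2) x := by
          apply ContinuousAt.pow
          apply ContinuousAt.log (by fun_prop) (by positivity)
        refine this.congr ?_
        filter_upwards [Iio_mem_nhds hx] with y hy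
        rw [hh, Set.indicator_of_mem (show y ∈ Set.Iic (1/2:ℝ) from le_of_lt (Set.mem_Iio.1 hy))]
      · refine (continuousAt_const (y := (0:ℝ))).congr ?_
        filter_upwards [Ioi_mem_nhds hx] with y hy
        rw [hh, Set.indicator_of_notMem (show y ∉ Set.Iic (1/2:ℝ) from not_le.2 (Set.mem_Ioi.1 hy))])
    (by
      intro y hy
      have hpos : 0 < y ^ (-(1/2) : ℝ) := Real.rpow_pos_of_pos hy _
      by_cases hy2 : y ≤ 1/2
      · rw [hh, Set.indicator_of_mem (show y ∈ Set.Iic (1/2:ℝ) from hy2)]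
        have := aux_log_bound (s := 2 * Real.sin (π * y)) hy (by linarith [aux_sin hy.le hy2])
          (by linarith [Real.sin_le_one (π * y)])
        refine le_trans ?_ this
        rw [abs_of_nonneg (sq_nonneg _), ← sq_abs]
        have := Real.pi_pos
        gcongr
        linarith
      · rw [hh, Set.indicator_of_notMem (show y ∉ Set.Iic (1/2:ℝ) from hy2), abs_zero]
        positivity)
  have hI : ∫ x in (0:ℝ)..1, h x = π ^ 2 / 24 := by
    rw [← aux_int_half, intervalIntegral.integral_of_le zero_le_one,
      intervalIntegral.integral_of_le (by norm_num), hh,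
      MeasureTheory.setIntegral_indicator measurableSet_Iic, Set.Ioc_inter_Iic]
    norm_num
  rw [hI] at hR
  have hp := Real.pi_pos
  have := hR.div_const (π ^ 2 / 24)
  rw [div_self (by positivity)] at this
  refine this.congr' ?_
  filter_upwards [eventually_gt_atTop 0] with m hm0
  have hm' : (0:ℝ) < m := by exact_mod_cast hm0
  rw [div_div, mul_comm (m:ℝ)]
  congr 1
  symm
  refine Finset.sum_of_injOn (fun k => k - 1) ?_ ?_ ?_ ?_
  · intro a ha b hb hab
    simp only [Finset.coe_Icc, Set.mem_Icc] at ha hb hab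
    omega
  · intro a ha
    simp only [Finset.coe_Icc, Set.mem_Icc, Finset.coe_range, Set.mem_Iio] at ha ⊢
    omega
  · intro k _ hk
    rw [hh]
    apply Set.indicator_of_notMem
    intro hle
    apply hk
    rw [Set.mem_Iic, div_le_iff₀ hm'] at hle
    have h2 : (((k + 1) * 2 : ℕ) : ℝ) ≤ m := by push_cast at hle ⊢; linarith
    have h3 : (k + 1) * 2 ≤ m := by exact_mod_cast h2
    refine ⟨k + 1, ?_, by simp⟩
    simp only [Finset.coe_Icc, Set.mem_Icc]
    omega
  · intro k hk
    rw [Finset.mem_Icc] at hk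
    have hk2 : k * 2 ≤ m := by omega
    have hk3 : (k : ℝ) * 2 ≤ m := by exact_mod_cast hk2
    have hmem : (k : ℝ) / m ∈ Set.Iic (1/2 : ℝ) := by
      rw [Set.mem_Iic, div_le_iff₀ hm']; linarith
    rw [Nat.sub_add_cancel hk.1, hh, Set.indicator_of_mem hmem, mul_div_assoc]
end

section
/- The integral of (log(2 sin(πu)))² over u from 0 to 1/2 equals π²/24. -/
open Real

noncomputable def logSqH (r θ : ℝ) : ℝ := ((Complex.log (1 - circleMap 0 r θ))^2).re

theorem circ_re (r θ : ℝ) : (1 - circleMap 0 r θ).re = 1 - r * Real.cos θ := by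
  simp [circleMap, Complex.exp_ofReal_mul_I_re]

theorem circ_im (r θ : ℝ) : (1 - circleMap 0 r θ).im = - (r * Real.sin θ) := by
  simp [circleMap, Complex.exp_ofReal_mul_I_im]

theorem circ_re_pos {r : ℝ} (h0 : 0 ≤ r) (h1 : r < 1) (θ : ℝ) : 0 < (1 - circleMap 0 r θ).re := by
  rw [circ_re]; nlinarith [Real.cos_le_one θ]

theorem logSqH_cont {r : ℝ} (h0 : 0 ≤ r) (h1 : r < 1) :
    Continuous (fun θ => (Complex.log (1 - circleMap 0 r θ))^2) := by
  refine Continuous.pow (Continuous.clog ?_ ?_) 2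
  · exact continuous_const.sub (continuous_circleMap 0 r)
  · intro θ; exact Or.inl (circ_re_pos h0 h1 θ)

theorem logSqH_full {r : ℝ} (h0 : 0 ≤ r) (h1 : r < 1) :
    ∫ θ in (0:ℝ)..(2 * π), logSqH r θ = 0 := by
  have hd : DiffContOnCl ℂ (fun z : ℂ => (Complex.log (1 - z))^2) (Metric.ball 0 |r|) := by
    apply DifferentiableOn.diffContOnCl
    intro z hz
    have hz' : ‖z‖ ≤ |r| := by
      simpa using Metric.closure_ball_subset_closedBall hz
    have : z.re < 1 := by
      have := Complex.re_le_norm z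
      rw [abs_of_nonneg h0] at hz'
      linarith
    apply DifferentiableAt.differentiableWithinAt
    refine DifferentiableAt.pow (DifferentiableAt.clog (by fun_prop) (Or.inl ?_)) 2
    simpa using this
  have h := hd.circleAverage
  rw [Real.circleAverage_def] at h
  have hpi := Real.pi_pos
  simp only [sub_zero, Complex.log_one, ne_eq, OfNat.ofNat_ne_zero, not_false_eq_true, zero_pow,
    smul_eq_zero, inv_eq_zero, mul_eq_zero, hpi.ne', or_self, false_or] at h
  have h2 := Complex.reCLM.intervalIntegral_comp_comm
    ((logSqH_cont h0 h1).intervalIntegrable (μ := MeasureTheory.volume) 0 (2 * π))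
  rw [h] at h2
  simpa [logSqH] using h2

theorem logSqH_symm {r : ℝ} (h0 : 0 ≤ r) (h1 : r < 1) (θ : ℝ) :
    logSqH r (2 * π - θ) = logSqH r θ := by
  have : (1 - circleMap 0 r (2 * π - θ)) = (starRingEnd ℂ) (1 - circleMap 0 r θ) := by
    apply Complex.ext
    · rw [Complex.conj_re, circ_re, circ_re, Real.cos_two_pi_sub]
    · rw [Complex.conj_im, circ_im, circ_im, Real.sin_two_pi_sub]; ring
  unfold logSqH
  rw [this, Complex.log_conj, ← map_pow, Complex.conj_re]
  have := circ_re_pos h0 h1 θ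
  intro h
  rw [Complex.arg_eq_pi_iff] at h
  linarith [h.1]

theorem logSqH_half {r : ℝ} (h0 : 0 ≤ r) (h1 : r < 1) :
    ∫ θ in (0:ℝ)..π, logSqH r θ = 0 := by
  have hc : Continuous (logSqH r) := Complex.continuous_re.comp (logSqH_cont h0 h1)
  have h := logSqH_full h0 h1
  rw [← intervalIntegral.integral_add_adjacent_intervals (b := π)
    (hc.intervalIntegrable _ _) (hc.intervalIntegrable _ _)] at h
  have h2 := intervalIntegral.integral_comp_sub_left (a := 0) (b := π) (logSqH r) (2 * π)
  simp only [logSqH_symm h0 h1] at h2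
  rw [show 2 * π - π = π by ring, sub_zero] at h2
  linarith

theorem one_sub_circ (θ : ℝ) : 1 - circleMap 0 1 θ =
    ((2 * Real.sin (θ / 2) : ℝ) : ℂ) * Complex.exp (((θ - π) / 2 : ℝ) * Complex.I) := by
  have e : θ = 2 * (θ / 2) := by ring
  have e2 : (θ - π) / 2 = θ / 2 - π / 2 := by ring
  have := Real.sin_sq_add_cos_sq (θ / 2)
  apply Complex.ext
  · rw [circ_re, Complex.re_ofReal_mul, Complex.exp_ofReal_mul_I_re, e2, Real.cos_sub_pi_div_two]
    conv_lhs => rw [e, Real.cos_two_mul]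
    linarith
  · rw [circ_im, Complex.im_ofReal_mul, Complex.exp_ofReal_mul_I_im, e2, Real.sin_sub_pi_div_two]
    conv_lhs => rw [e, Real.sin_two_mul]
    ring

theorem sin_half_lb {θ : ℝ} (h0 : 0 < θ) (h1 : θ ≤ π) : π⁻¹ * θ ≤ Real.sin (θ / 2) := by
  have := Real.mul_le_sin (x := θ / 2) (by linarith) (by linarith)
  calc π⁻¹ * θ = 2 / π * (θ / 2) := by field_simp
    _ ≤ _ := this

theorem sin_half_pos {θ : ℝ} (h0 : 0 < θ) (h1 : θ ≤ π) : 0 < Real.sin (θ / 2) := 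
  lt_of_lt_of_le (by positivity) (sin_half_lb h0 h1)

theorem logSqH_one {θ : ℝ} (h0 : 0 < θ) (h1 : θ ≤ π) :
    logSqH 1 θ = (Real.log (2 * Real.sin (θ / 2)))^2 - ((θ - π) / 2)^2 := by
  have hs := sin_half_pos h0 h1
  unfold logSqH
  rw [one_sub_circ, Complex.log_ofReal_mul (by positivity) (Complex.exp_ne_zero _),
    Complex.log_exp]
  · simp only [sq, Complex.mul_re, Complex.add_re, Complex.add_im, Complex.ofReal_re,
      Complex.ofReal_im, Complex.mul_im, Complex.I_re, Complex.I_im]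
    ring
  · rw [Complex.im_ofReal_mul, Complex.I_im]; linarith
  · rw [Complex.im_ofReal_mul, Complex.I_im]; linarith

theorem norm_lb {r θ : ℝ} (hr0 : 0 ≤ r) (hr1 : r ≤ 1) (h0 : 0 < θ) (h1 : θ ≤ π) :
    π⁻¹ * θ ≤ ‖1 - circleMap 0 r θ‖ := by
  have hs := sin_half_lb h0 h1
  have hs' := sin_half_pos h0 h1
  have e1 : ‖1 - circleMap 0 1 θ‖ = 2 * Real.sin (θ / 2) := by
    rw [one_sub_circ, norm_mul, Complex.norm_exp_ofReal_mul_I, Complex.norm_real, mul_one,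
      Real.norm_of_nonneg (by positivity)]
  have e2 : circleMap 0 r θ = r * circleMap 0 1 θ := by simp [circleMap]
  have n1 : ‖circleMap 0 1 θ‖ = 1 := by simp
  have nr : ‖circleMap 0 r θ‖ = r := by simp [abs_of_nonneg hr0]
  have t1 : ‖1 - circleMap 0 1 θ‖ ≤ ‖1 - circleMap 0 r θ‖ + (1 - r) := by
    have : 1 - circleMap 0 1 θ = (1 - circleMap 0 r θ) - ((1 - r : ℝ) : ℂ) * circleMap 0 1 θ := by
      rw [e2]; push_cast; ring
    rw [this]
    refine (norm_sub_le _ _).trans ?_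
    rw [norm_mul, n1, Complex.norm_real, Real.norm_of_nonneg (by linarith), mul_one]
  have t2 : 1 - r ≤ ‖1 - circleMap 0 r θ‖ := by
    have := norm_sub_norm_le (1:ℂ) (circleMap 0 r θ)
    rwa [nr, norm_one] at this
  linarith

theorem logSqH_bound {r θ : ℝ} (hr0 : 0 ≤ r) (hr1 : r ≤ 1) (h0 : 0 < θ) (h1 : θ ≤ π) :
    ‖logSqH r θ‖ ≤ (1 + π^2) + 16 * (π⁻¹ * θ) ^ (-1/2 : ℝ) := by
  have hlb := norm_lb hr0 hr1 h0 h1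
  set w := 1 - circleMap 0 r θ with hw
  have hub : ‖w‖ ≤ 2 := by
    have := norm_sub_le (1:ℂ) (circleMap 0 r θ)
    have nr : ‖circleMap 0 r θ‖ = r := by simp [abs_of_nonneg hr0]
    rw [nr, norm_one] at this
    linarith
  set x := π⁻¹ * θ with hx
  have hx0 : 0 < x := by positivity
  have hx1 : x ≤ 1 := by
    rw [hx, inv_mul_le_iff₀ Real.pi_pos]; linarith
  have hlogx : (Real.log x)^2 ≤ 16 * x ^ (-1/2 : ℝ) := by
    have h := Real.abs_log_mul_self_rpow_lt x (1/4) hx0 hx1 (by norm_num)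
    have h4 : |Real.log x * x ^ (1/4:ℝ)|^2 ≤ 4^2 := by
      apply pow_le_pow_left₀ (abs_nonneg _); norm_num at h ⊢; exact h.le
    rw [sq_abs, mul_pow] at h4
    have e : (x ^ (1/4:ℝ))^2 = x ^ (1/2:ℝ) := by
      rw [← Real.rpow_natCast, ← Real.rpow_mul hx0.le]; norm_num
    have e' : x ^ (1/2:ℝ) * x ^ (-1/2 : ℝ) = 1 := by
      rw [← Real.rpow_add hx0]; norm_num
    have hp : 0 < x ^ (-1/2 : ℝ) := Real.rpow_pos_of_pos hx0 _
    rw [e] at h4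
    calc (Real.log x)^2 = (Real.log x)^2 * (x ^ (1/2:ℝ) * x ^ (-1/2 : ℝ)) := by rw [e', mul_one]
      _ = ((Real.log x)^2 * x ^ (1/2:ℝ)) * x ^ (-1/2 : ℝ) := by ring
      _ ≤ 4^2 * x ^ (-1/2 : ℝ) := by gcongr
      _ = _ := by norm_num
  have hlogw : (Real.log ‖w‖)^2 ≤ 1 + (Real.log x)^2 := by
    have l1 : Real.log x ≤ Real.log ‖w‖ := Real.log_le_log hx0 hlb
    have l2 : Real.log ‖w‖ ≤ 1 := by
      have := Real.log_le_sub_one_of_pos (hx0.trans_le hlb)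
      linarith
    have l3 : Real.log x ≤ 0 := Real.log_nonpos hx0.le hx1
    rcases le_total 0 (Real.log ‖w‖) with h | h <;> nlinarith
  have harg : (Complex.arg w)^2 ≤ π^2 := by
    rw [sq_le_sq, abs_of_pos Real.pi_pos]; exact Complex.abs_arg_le_pi w
  have : logSqH r θ = (Real.log ‖w‖)^2 - (Complex.arg w)^2 := by
    unfold logSqH
    rw [← hw, sq, Complex.mul_re, Complex.log_re, Complex.log_im]; ring
  rw [this, Real.norm_eq_abs, abs_le]
  constructor <;> nlinarith [sq_nonneg (Real.log ‖w‖), sq_nonneg (Complex.arg w), sq_nonneg (Real.log x)]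

theorem bound_int : IntervalIntegrable (fun θ : ℝ => (1 + π^2) + 16 * (π⁻¹ * θ) ^ (-1/2 : ℝ))
    MeasureTheory.volume 0 π := by
  have h := (intervalIntegral.intervalIntegrable_rpow' (a := 0) (b := 1) (r := -1/2)
    (by norm_num)).comp_mul_left (c := π⁻¹)
  rw [zero_div, one_div, inv_inv] at h
  exact intervalIntegrable_const.add (h.const_mul 16)

theorem logSqH_meas (r : ℝ) : Measurable (logSqH r) := by
  unfold logSqH
  have : Measurable (circleMap 0 r) := (continuous_circleMap 0 r).measurable
  fun_prop

theorem logSqH_one_int : IntervalIntegrable (logSqH 1) MeasureTheory.volume 0 π := by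
  refine bound_int.mono_fun' (logSqH_meas 1).aestronglyMeasurable ?_
  refine (MeasureTheory.ae_restrict_iff' measurableSet_uIoc).2 (Filter.Eventually.of_forall ?_)
  intro θ hθ
  rw [Set.uIoc_of_le Real.pi_pos.le] at hθ
  exact logSqH_bound zero_le_one le_rfl hθ.1 hθ.2

theorem logSqH_one_integral : ∫ θ in (0:ℝ)..π, logSqH 1 θ = 0 := by
  have ev : ∀ᶠ r : ℝ in nhdsWithin 1 (Set.Iio 1), 0 ≤ r ∧ r < 1 := by
    filter_upwards [self_mem_nhdsWithin, mem_nhdsWithin_of_mem_nhds (Ioi_mem_nhds zero_lt_one)]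
      with r h1 h2
    exact ⟨le_of_lt h2, h1⟩
  have ht : Filter.Tendsto (fun r => ∫ θ in (0:ℝ)..π, logSqH r θ) (nhdsWithin 1 (Set.Iio 1))
      (nhds (∫ θ in (0:ℝ)..π, logSqH 1 θ)) := by
    refine intervalIntegral.tendsto_integral_filter_of_dominated_convergence _ ?_ ?_ bound_int ?_
    · exact Filter.Eventually.of_forall fun r => (logSqH_meas r).aestronglyMeasurable
    · filter_upwards [ev] with r hr
      refine Filter.Eventually.of_forall fun θ hθ => ?_
      rw [Set.uIoc_of_le Real.pi_pos.le] at hθ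
      exact logSqH_bound hr.1 hr.2.le hθ.1 hθ.2
    · refine Filter.Eventually.of_forall fun θ hθ => ?_
      rw [Set.uIoc_of_le Real.pi_pos.le] at hθ
      have hs := sin_half_pos hθ.1 hθ.2
      have hsl : 1 - circleMap 0 1 θ ∈ Complex.slitPlane := by
        left
        rw [circ_re, show θ = 2 * (θ / 2) by ring, Real.cos_two_mul]
        nlinarith [Real.sin_sq_add_cos_sq (θ / 2)]
      have : ContinuousAt (fun r => logSqH r θ) 1 := by
        unfold logSqH
        refine Complex.continuous_re.continuousAt.comp ?_
        have hc : ContinuousAt (fun r : ℝ => 1 - circleMap 0 r θ) 1 := by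
          unfold circleMap
          fun_prop
        exact ContinuousAt.pow (hc.clog hsl) 2
      exact this.tendsto.mono_left nhdsWithin_le_nhds
  refine tendsto_nhds_unique ht (tendsto_const_nhds.congr' ?_)
  filter_upwards [ev] with r hr
  exact (logSqH_half hr.1 hr.2).symm

theorem integral_log_sq_two_sin :
    ∫ u in (0:ℝ)..(1/2), (Real.log (2 * Real.sin (π * u)))^2 = π^2 / 24 := by
  have hpi := Real.pi_pos
  have h1 : ∫ θ in (0:ℝ)..π, (Real.log (2 * Real.sin (θ / 2)))^2 =
      ∫ θ in (0:ℝ)..π, (logSqH 1 θ + ((θ - π) / 2)^2) := by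
    apply intervalIntegral.integral_congr_ae
    refine Filter.Eventually.of_forall fun θ hθ => ?_
    rw [Set.uIoc_of_le Real.pi_pos.le] at hθ
    rw [logSqH_one hθ.1 hθ.2]; ring
  have h2 : ∫ θ in (0:ℝ)..π, ((θ - π) / 2)^2 = π^3 / 12 := by
    have : ∀ θ : ℝ, ((θ - π) / 2)^2 = (1/4) * (θ - π)^2 := fun θ => by ring
    simp_rw [this]
    rw [intervalIntegral.integral_const_mul,
      intervalIntegral.integral_comp_sub_right (fun x => x^2) π, integral_pow]
    norm_num; ring
  rw [intervalIntegral.integral_add logSqH_one_int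
    (Continuous.intervalIntegrable (by fun_prop) _ _), logSqH_one_integral, h2, zero_add] at h1
  have h3 := intervalIntegral.mul_integral_comp_mul_left (a := 0) (b := 1/2)
    (f := fun θ => (Real.log (2 * Real.sin (θ / 2)))^2) (c := 2 * π)
  rw [mul_zero, show 2 * π * (1/2) = π by ring, h1] at h3
  simp_rw [show ∀ u : ℝ, 2 * π * u / 2 = π * u from fun u => by ring] at h3
  have h4 : (2 * π) ≠ 0 := by positivity
  apply mul_left_cancel₀ h4
  rw [h3]; ring
end
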